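/- Incomplete-gamma limits of the binomial-type sums at the singular origin (Lemma 3.5(c)). Under the singular-origin setup with 2L a positive integer, for z, w ∈ ℂ set ζ := z/√(Nδ), η := w/√(Nδ) with δ := (n+L)/N. Then, uniformly for (z,w) in compact subsets of ℂ × ℂ as N → ∞: (i) ∑_{k=0}^{2N−1} (Γ(2n+2L)/(Γ(k+2L+1)Γ(2n−k)))·(ζη)^{k+2L}·(1+ζη)^{−(2n+2L−1)} converges to P(2L,2zw) := ((2zw)^{2L}/Γ(2L))∫_0^1 s^{2L−1}e^{−2zws}ds; (ii) ∑_{k=0}^{N−1} (Γ(n+L+1/2)/(Γ(k+L+1)Γ(n−k+1/2)))·η^{2k+2L}·(1+η²)^{−(n+L−1/2)} converges to P(L,w²) := (w^{2L}/Γ(L))∫_0^1 s^{L−1}e^{−w²s}ds; and (iii) ∑_{k=0}^{N−1} (Γ(n+L+1/2)/(Γ(k+L+3/2)Γ(n−k)))·η^{2k+2L+1}·(1+η²)^{−(n+L−1/2)} converges to P(L+1/2,w²) := (w^{2L+1}/Γ(L+1/2))∫_0^1 s^{L−1/2}e^{−w²s}ds. In (ii) and (iii) the power (1+η²)^{−(n+L−1/2)}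 is the principal branch. -/

import Mathlib

open MeasureTheory Filter Finset

noncomputable section

namespace SI

/-- The density value `δ = ((n+L)/N)(1+p²)⁻²`. -/
def dlt (N : ℕ) (n L p : ℝ) : ℝ := ((n+L)/N) * (1+p^2)^(-2 : ℝ)

/-- `√(Nδ)`. -/
def sc (N : ℕ) (n L p : ℝ) : ℝ := Real.sqrt (N * dlt N n L p)

/-- The regularised incomplete gamma function
`P(2L, x) = (x^{2L}/Γ(2L)) ∫₀¹ s^{2L-1} e^{-xs} ds` with `M = 2L ∈ ℕ`. -/
def P2L (M : ℕ) (x : ℂ) : ℂ :=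
  (x ^ M / Complex.Gamma ((M : ℝ) : ℂ)) *
    ∫ s in (0:ℝ)..1, (s:ℂ) ^ (M-1) * Complex.exp (-x*(s:ℂ))

/-- `P(L+1/2, w²) = (w^{2L+1}/Γ(L+1/2)) ∫₀¹ s^{L-1/2} e^{-w²s} ds` with `M = 2L`. -/
def PLhalf (M : ℕ) (L : ℝ) (w : ℂ) : ℂ :=
  (w ^ (M+1) / Complex.Gamma ((L+1/2 : ℝ) : ℂ)) *
    ∫ s in (0:ℝ)..1, ((s ^ (L-1/2) : ℝ) : ℂ) * Complex.exp (-w^2*(s:ℂ))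

/-- The admissible system sizes in the singular-origin regime:
positive `N` for which `n = (b+1)N` is an integer. -/
def Ssing (b : ℝ) : Set ℕ :=
  {N | 0 < N ∧ ∃ nm : ℕ, (nm : ℝ) = (b+1)*N}

/-- `P(L, w²) = (w^{2L}/Γ(L)) ∫₀¹ s^{L-1} e^{-w²s} ds` with `M = 2L`. -/
def PLfun (M : ℕ) (w : ℂ) : ℂ :=
  (w ^ M / Complex.Gamma (((M:ℝ)/2 : ℝ) : ℂ)) *
    ∫ s in (0:ℝ)..1, ((s ^ ((M:ℝ)/2-1) : ℝ) : ℂ) * Complex.exp (-w^2*(s:ℂ))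

/-- The rescaled point `ζ = z/√(Nδ)` at the origin. -/
def zet0 (N : ℕ) (n L : ℝ) (z : ℂ) : ℂ := z / (sc N n L 0 : ℂ)

/-!
Write `A` for the argument of the leading Gamma function and `u` for `ζη` or `η²`. Each sum is a
truncated upper tail of the binomial law with `A - 1` trials and odds `u`, started at a possibly
fractional index `a`. Under the scaling `A u → x` it converges to the corresponding tail of the
Poisson law, `e⁻ˣ ∑ₖ x^(a+k) / Γ(a+k+1)`, which is the regularised incomplete Gamma function
`P(a, x)`.

Log-convexity of `Γ` gives `Γ(A) / Γ(A - s) ~ Aˢ` and also the bound `Γ(A) ≤ Aˢ Γ(A - s)`, whence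
dominated convergence term by term. Letting `N` and the point `(z, w)` converge jointly makes the
limit locally uniform.
-/

open Topology Function

section LocallyUniformConvergence

variable {ι X Y : Type*} [TopologicalSpace X] {l : Filter ι} {F : ι → X → Y} {f : X → Y}

theorem continuous_of_tendsto_uncurry [TopologicalSpace Y] [RegularSpace Y] [l.NeBot]
    (h : ∀ x, Tendsto (uncurry F) (l ×ˢ 𝓝 x) (𝓝 (f x))) : Continuous f := by
  refine continuous_iff_continuousAt.2 fun x => (closed_nhds_basis (f x)).tendsto_right_iff.2 ?_
  rintro V ⟨hV, hVclosed⟩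
  have near : ∀ᶠ y in 𝓝 x, ∀ᶠ i in l, F i y ∈ V :=
    (eventually_swap_iff.1 ((h x).eventually_mem hV)).curry
  filter_upwards [near] with y hy
  exact hVclosed.mem_of_tendsto ((h y).comp (tendsto_id.prodMk tendsto_const_nhds)) hy

theorem tendstoLocallyUniformly_of_tendsto_uncurry [UniformSpace Y]
    (h : ∀ x, Tendsto (uncurry F) (l ×ˢ 𝓝 x) (𝓝 (f x))) : TendstoLocallyUniformly F f l := by
  rcases l.eq_or_neBot with rfl | _
  · exact fun _ _ _ => ⟨_, univ_mem, eventually_bot⟩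
  · refine tendstoLocallyUniformly_iff_filter.2 fun x => ?_
    have hf : Tendsto (fun q : ι × X => f q.2) (l ×ˢ 𝓝 x) (𝓝 (f x)) :=
      ((continuous_of_tendsto_uncurry h).tendsto x).comp tendsto_snd
    exact (hf.prodMk_nhds (h x)).mono_right (nhds_le_uniformity (f x))

end LocallyUniformConvergence

/-! ### Dominated convergence and the exponential limit -/

section Limits

variable {ι : Type*} {l : Filter ι}

theorem tendsto_sum_range_of_dominated {G : Type*} [NormedAddCommGroup G] [CompleteSpace G]
    {f : ι → ℕ → G} {g : ℕ → G} {bound : ℕ → ℝ} {m : ι → ℕ} (hbound : Summable bound)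
    (hm : Tendsto m l atTop) (hf : ∀ k, Tendsto (f · k) l (𝓝 (g k)))
    (hle : ∀ᶠ i in l, ∀ k < m i, ‖f i k‖ ≤ bound k) :
    Tendsto (fun i => ∑ k ∈ range (m i), f i k) l (𝓝 (∑' k, g k)) := by
  simp_rw [fun i => sum_eq_tsum_indicator (f i) (range (m i))]
  refine tendsto_tsum_of_dominated_convergence hbound.abs (fun k => ?_) ?_
  · refine (hf k).congr' ?_
    filter_upwards [hm.eventually_gt_atTop k] with i hi
    rw [Set.indicator_of_mem (by simpa using hi)]
  · filter_upwards [hle] with i hi k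
    by_cases hk : k < m i
    · rw [Set.indicator_of_mem (by simpa using hk)]
      exact (hi k hk).trans (le_abs_self _)
    · rw [Set.indicator_of_notMem (by simpa using hk), norm_zero]
      exact abs_nonneg _

theorem tendsto_zero_of_ofReal_mul_tendsto {A : ι → ℝ} {u : ι → ℂ} {x : ℂ}
    (hA : Tendsto A l atTop) (hAu : Tendsto (fun i => A i * u i) l (𝓝 x)) :
    Tendsto u l (𝓝 0) := by
  have limit := (tendsto_inv_atTop_zero.comp hA).ofReal.mul hAu
  rw [Complex.ofReal_zero, zero_mul] at limit
  refine limit.congr' ?_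
  filter_upwards [hA.eventually_ne_atTop 0] with i hi
  rw [comp_apply, Complex.ofReal_inv, inv_mul_cancel_left₀ (Complex.ofReal_ne_zero.2 hi)]

theorem tendsto_mul_log_one_add {u B : ι → ℂ} {x : ℂ} (hu : Tendsto u l (𝓝 0))
    (hBu : Tendsto (fun i => B i * u i) l (𝓝 x)) :
    Tendsto (fun i => B i * Complex.log (1 + u i)) l (𝓝 x) := by
  have error_isBigO : (fun i => B i * (Complex.log (1 + u i) - u i)) =O[l]
      fun i => B i * u i ^ 2 :=
    (Asymptotics.isBigO_refl B l).mul (Complex.log_sub_self_isBigO.comp_tendsto hu)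
  have square_tendsto : Tendsto (fun i => B i * u i ^ 2) l (𝓝 0) := by
    simpa only [mul_zero, mul_assoc, ← sq] using hBu.mul hu
  simpa only [mul_sub, sub_add_cancel, zero_add] using
    (error_isBigO.trans_tendsto square_tendsto).add hBu

theorem tendsto_one_add_cpow {u B : ι → ℂ} {x : ℂ} (hu : Tendsto u l (𝓝 0))
    (hBu : Tendsto (fun i => B i * u i) l (𝓝 x)) :
    Tendsto (fun i => (1 + u i) ^ B i) l (𝓝 (Complex.exp x)) := by
  refine ((Complex.continuous_exp.tendsto x).comp (tendsto_mul_log_one_add hu hBu)).congr' ?_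
  filter_upwards [hu.eventually_ne (show (0 : ℂ) ≠ -1 by simp)] with i hi
  have base_ne_zero : 1 + u i ≠ 0 := fun h => hi (eq_neg_of_add_eq_zero_right h)
  rw [comp_apply, Complex.cpow_def_of_ne_zero base_ne_zero, mul_comm]

end Limits

/-! ### Ratios of Gamma functions -/

theorem Gamma_add_le_Gamma_mul_rpow {x s : ℝ} (hx : 0 < x) (hs : 0 < s) :
    Real.Gamma (x + s) ≤ Real.Gamma x * (x + s) ^ s := by
  have hxs : 0 < x + s := by positivity
  have slope_le := Real.convexOn_log_Gamma.slope_mono_adjacent (x := x) (y := x + s)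
    (z := x + s + 1) hx (Set.mem_Ioi.2 (by positivity)) (by linarith) (by linarith)
  have hΓ := Real.Gamma_pos_of_pos hx
  have hΓs := Real.Gamma_pos_of_pos hxs
  rw [add_sub_cancel_left, add_sub_cancel_left, div_one, div_le_iff₀ hs, comp_apply, comp_apply,
    comp_apply, Real.Gamma_add_one hxs.ne', Real.log_mul hxs.ne' hΓs.ne'] at slope_le
  rw [← Real.log_le_log_iff hΓs (by positivity), Real.log_mul hΓ.ne' (by positivity),
    Real.log_rpow hxs]
  linarith

theorem Gamma_mul_rpow_le_Gamma_add {x s : ℝ} (hx : 1 < x) (hs : 0 < s) :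
    Real.Gamma x * (x - 1) ^ s ≤ Real.Gamma (x + s) := by
  have hx1 : 0 < x - 1 := sub_pos.2 hx
  have slope_le := Real.convexOn_log_Gamma.slope_mono_adjacent (x := x - 1) (y := x)
    (z := x + s) hx1 (Set.mem_Ioi.2 (by positivity)) (by linarith) (by linarith)
  have hΓ := Real.Gamma_pos_of_pos (zero_lt_one.trans hx)
  have hΓs := Real.Gamma_pos_of_pos (show 0 < x + s by positivity)
  have log_Gamma : Real.log (Real.Gamma x) = Real.log (x - 1) + Real.log (Real.Gamma (x - 1)) := by
    rw [← Real.log_mul hx1.ne' (Real.Gamma_pos_of_pos hx1).ne', ← Real.Gamma_add_one hx1.ne',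
      sub_add_cancel]
  rw [sub_sub_cancel, add_sub_cancel_left, div_one, le_div_iff₀ hs, comp_apply, comp_apply,
    comp_apply] at slope_le
  rw [← Real.log_le_log_iff (by positivity) hΓs, Real.log_mul hΓ.ne' (by positivity),
    Real.log_rpow hx1]
  have slope_eq : Real.log (Real.Gamma x) - Real.log (Real.Gamma (x - 1)) = Real.log (x - 1) := by
    linarith
  rw [slope_eq] at slope_le
  linarith

/-- The binomial coefficient `A - 1` over `s` for real entries, written with Gamma functions. The
upper entry is shifted by one so that `A` is the argument in the numerator. -/
def gammaChoose (A s : ℝ) : ℝ := Real.Gamma A / (Real.Gamma (s + 1) * Real.Gamma (A - s))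

theorem ofReal_gammaChoose (A s : ℝ) :
    (gammaChoose A s : ℂ) = Complex.Gamma A / (Complex.Gamma ((s + 1 : ℝ) : ℂ) *
      Complex.Gamma ((A - s : ℝ) : ℂ)) := by
  simp only [gammaChoose, Complex.Gamma_ofReal, Complex.ofReal_div, Complex.ofReal_mul]

theorem gammaChoose_nonneg {A s : ℝ} (hs : 0 < s) (hsA : s < A) : 0 ≤ gammaChoose A s := by
  have hΓA := Real.Gamma_pos_of_pos (hs.trans hsA)
  have hΓs := Real.Gamma_pos_of_pos (hs.trans (lt_add_one s))
  have hΓsub := Real.Gamma_pos_of_pos (sub_pos.2 hsA)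
  exact div_nonneg hΓA.le (mul_pos hΓs hΓsub).le

theorem gammaChoose_div_rpow_le {A s : ℝ} (hs : 0 < s) (hsA : s < A) :
    gammaChoose A s / A ^ s ≤ (Real.Gamma (s + 1))⁻¹ := by
  have hA : 0 < A := hs.trans hsA
  have hΓsub := Real.Gamma_pos_of_pos (sub_pos.2 hsA)
  have upper := Gamma_add_le_Gamma_mul_rpow (sub_pos.2 hsA) hs
  rw [sub_add_cancel] at upper
  calc gammaChoose A s / A ^ s
      ≤ Real.Gamma (A - s) * A ^ s / (Real.Gamma (s + 1) * Real.Gamma (A - s)) / A ^ s := by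
        unfold gammaChoose; gcongr
    _ = (Real.Gamma (s + 1))⁻¹ := by field_simp

theorem le_gammaChoose_div_rpow {A s : ℝ} (hs : 0 < s) (hsA : s + 1 < A) :
    (1 - (s + 1) / A) ^ s * (Real.Gamma (s + 1))⁻¹ ≤ gammaChoose A s / A ^ s := by
  have hA : 0 < A := by linarith
  have hΓsub := Real.Gamma_pos_of_pos (show 0 < A - s by linarith)
  have lower := Gamma_mul_rpow_le_Gamma_add (show 1 < A - s by linarith) hs
  rw [sub_add_cancel, sub_sub] at lower
  calc (1 - (s + 1) / A) ^ s * (Real.Gamma (s + 1))⁻¹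
      = (A - (s + 1)) ^ s / A ^ s * (Real.Gamma (s + 1))⁻¹ := by
        rw [one_sub_div hA.ne', Real.div_rpow (by linarith) hA.le]
    _ = Real.Gamma (A - s) * (A - (s + 1)) ^ s /
          (Real.Gamma (s + 1) * Real.Gamma (A - s)) / A ^ s := by field_simp
    _ ≤ gammaChoose A s / A ^ s := by unfold gammaChoose; gcongr

theorem tendsto_gammaChoose_div_rpow {s : ℝ} (hs : 0 < s) :
    Tendsto (fun A => gammaChoose A s / A ^ s) atTop (𝓝 (Real.Gamma (s + 1))⁻¹) := by
  have lower : Tendsto (fun A : ℝ => (1 - (s + 1) / A) ^ s * (Real.Gamma (s + 1))⁻¹) atTop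
      (𝓝 (Real.Gamma (s + 1))⁻¹) := by
    have base : Tendsto (fun A : ℝ => 1 - (s + 1) / A) atTop (𝓝 1) := by
      simpa only [id, sub_zero] using (tendsto_id.const_div_atTop (s + 1)).const_sub (1 : ℝ)
    simpa only [Real.one_rpow, one_mul] using
      (base.rpow_const (Or.inr hs.le)).mul_const (Real.Gamma (s + 1))⁻¹
  refine tendsto_of_tendsto_of_tendsto_of_le_of_le' lower tendsto_const_nhds ?_ ?_
  · filter_upwards [eventually_gt_atTop (s + 1)] with A hA using le_gammaChoose_div_rpow hs hA
  · filter_upwards [eventually_gt_atTop s] with A hA using gammaChoose_div_rpow_le hs hA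

/-! ### The entire incomplete Gamma function -/

/-- Tricomi's entire incomplete Gamma function `γ*(a, x) = x⁻ᵃ P(a, x)`. Dividing `P(a, x)` by the
multivalued power `xᵃ` leaves an entire function of `x`. -/
def tricomiGamma (a : ℝ) (x : ℂ) : ℂ :=
  1 / Complex.Gamma a * ∫ s in (0:ℝ)..1, ((s ^ (a - 1) : ℝ) : ℂ) * Complex.exp (-x * s)

theorem P2L_eq_pow_mul_tricomiGamma {M : ℕ} (hM : 1 ≤ M) (x : ℂ) :
    P2L M x = x ^ M * tricomiGamma M x := by
  have power_eq (s : ℝ) : ((s ^ ((M : ℝ) - 1) : ℝ) : ℂ) = (s : ℂ) ^ (M - 1) := by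
    rw [← Nat.cast_pred hM, Real.rpow_natCast, Complex.ofReal_pow]
  simp only [P2L, tricomiGamma, power_eq]
  ring

theorem PLfun_eq_pow_mul_tricomiGamma (M : ℕ) (w : ℂ) :
    PLfun M w = w ^ M * tricomiGamma ((M : ℝ) / 2) (w ^ 2) := by
  unfold PLfun tricomiGamma
  ring

theorem PLhalf_eq_pow_mul_tricomiGamma (M : ℕ) (L : ℝ) (w : ℂ) :
    PLhalf M L w = w ^ (M + 1) * tricomiGamma (L + 1 / 2) (w ^ 2) := by
  have exponent_eq : L + 1 / 2 - 1 = L - 1 / 2 := by ring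
  simp only [PLhalf, tricomiGamma, exponent_eq]
  ring

section TricomiGamma

variable {a : ℝ}

theorem integral_rpow_mul_one_sub_pow (ha : 0 < a) (k : ℕ) :
    ∫ s in (0:ℝ)..1, ((s ^ (a - 1) : ℝ) : ℂ) * (1 - s) ^ k =
      Complex.Gamma a * k.factorial / Real.Gamma (a + k + 1) := by
  calc ∫ s in (0:ℝ)..1, ((s ^ (a - 1) : ℝ) : ℂ) * (1 - s) ^ k
      = Complex.betaIntegral a (k + 1) := by
        refine intervalIntegral.integral_congr fun s hs => ?_
        rw [Set.uIcc_of_le zero_le_one] at hs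
        simp only [Complex.ofReal_cpow hs.1, add_sub_cancel_right, Complex.cpow_natCast,
          Complex.ofReal_sub, Complex.ofReal_one]
    _ = Complex.Gamma a * Complex.Gamma (k + 1) / Complex.Gamma (a + (k + 1)) :=
        Complex.betaIntegral_eq_Gamma_mul_div _ _ (by simpa using ha)
          (by simpa using k.cast_add_one_pos)
    _ = Complex.Gamma a * k.factorial / Real.Gamma (a + k + 1) := by
        rw [Complex.Gamma_nat_eq_factorial, ← Complex.Gamma_ofReal]
        push_cast
        ring_nf

theorem hasSum_integral_rpow_mul_one_sub_pow (ha : 0 < a) (x : ℂ) :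
    HasSum (fun k : ℕ => ∫ s in (0:ℝ)..1,
        ((s ^ (a - 1) : ℝ) : ℂ) * (1 - s) ^ k * (x ^ k / k.factorial))
      (∫ s in (0:ℝ)..1, ((s ^ (a - 1) : ℝ) : ℂ) * Complex.exp (x * (1 - s))) := by
  refine intervalIntegral.hasSum_integral_of_dominated_convergence
    (fun k s => s ^ (a - 1) * (‖x‖ ^ k / k.factorial))
    (fun k => Measurable.aestronglyMeasurable (by fun_prop)) (fun k => ?_) ?_ ?_ ?_
  · refine .of_forall fun s hs => ?_
    rw [Set.uIoc_of_le zero_le_one] at hs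
    have rpow_nonneg := Real.rpow_nonneg hs.1.le (a - 1)
    have norm_one_sub_le : ‖(1 - s : ℂ)‖ ≤ 1 := by
      rw [← Complex.ofReal_one, ← Complex.ofReal_sub, Complex.norm_real, Real.norm_eq_abs, abs_le]
      constructor <;> linarith [hs.1, hs.2]
    rw [norm_mul, norm_mul, norm_div, norm_pow, norm_pow, Complex.norm_natCast,
      Complex.norm_of_nonneg rpow_nonneg]
    gcongr
    exact mul_le_of_le_one_right rpow_nonneg (pow_le_one₀ (norm_nonneg _) norm_one_sub_le)
  · exact .of_forall fun s _ => (Real.summable_pow_div_factorial ‖x‖).mul_left _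
  · simp only [tsum_mul_left]
    exact (intervalIntegral.intervalIntegrable_rpow' (by linarith)).mul_const _
  · refine .of_forall fun s _ => ?_
    rw [Complex.exp_eq_exp_ℂ]
    refine ((NormedSpace.expSeries_div_hasSum_exp (x * (1 - s : ℂ))).mul_left _).congr_fun
      fun k => ?_
    rw [mul_pow]
    ring

theorem hasSum_pow_div_Gamma (ha : 0 < a) (x : ℂ) :
    HasSum (fun k : ℕ => x ^ k / Real.Gamma (a + k + 1)) (Complex.exp x * tricomiGamma a x) := by
  have hΓ : Complex.Gamma a ≠ 0 := Complex.Gamma_ne_zero_of_re_pos (by simpa using ha)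
  have total : 1 / Complex.Gamma a *
      ∫ s in (0:ℝ)..1, ((s ^ (a - 1) : ℝ) : ℂ) * Complex.exp (x * (1 - s)) =
      Complex.exp x * tricomiGamma a x := by
    have exp_eq (s : ℝ) : Complex.exp (x * (1 - s)) = Complex.exp x * Complex.exp (-x * s) := by
      rw [← Complex.exp_add]
      ring_nf
    simp only [tricomiGamma, exp_eq, mul_left_comm _ (Complex.exp x),
      intervalIntegral.integral_const_mul]
  rw [← total]
  refine ((hasSum_integral_rpow_mul_one_sub_pow ha x).mul_left _).congr_fun fun k => ?_
  have hk : (k.factorial : ℂ) ≠ 0 := mod_cast k.factorial_ne_zero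
  rw [intervalIntegral.integral_mul_const, integral_rpow_mul_one_sub_pow ha]
  field_simp

theorem summable_pow_div_Gamma (ha : 0 < a) (R : ℝ) :
    Summable fun k : ℕ => R ^ k / Real.Gamma (a + k + 1) :=
  mod_cast (hasSum_pow_div_Gamma ha R).summable

end TricomiGamma

/-! ### Poisson limit of binomial tails -/

/-- The upper tail of the binomial law with `A - 1` trials and odds `u`, started at the possibly
fractional index `a`, cut off after `m` terms, and divided by `uᵃ`. The division keeps every power
of `u` an integer one. -/
def binomialTail (a A : ℝ) (m : ℕ) (u : ℂ) : ℂ :=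
  (∑ k ∈ range m, (gammaChoose A (a + k) : ℂ) * u ^ k) * (1 + u) ^ ((-(A - 1) : ℝ) : ℂ)

section PoissonLimit

variable {ι : Type*} {l : Filter ι} {a : ℝ} {A : ι → ℝ} {m : ι → ℕ} {x : ℂ}

theorem tendsto_sum_gammaChoose_div_rpow_mul_pow {X : ι → ℂ} (ha : 0 < a) (hA : Tendsto A l atTop)
    (hm : Tendsto m l atTop) (hmA : ∀ᶠ i in l, a + m i < A i + 1) (hX : Tendsto X l (𝓝 x)) :
    Tendsto (fun i => ∑ k ∈ range (m i), ((gammaChoose (A i) (a + k) / A i ^ (a + k) : ℝ) : ℂ) *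
      X i ^ k) l (𝓝 (Complex.exp x * tricomiGamma a x)) := by
  rw [← (hasSum_pow_div_Gamma ha x).tsum_eq]
  refine tendsto_sum_range_of_dominated (summable_pow_div_Gamma ha (‖x‖ + 1)) hm (fun k => ?_) ?_
  · have coeff := ((tendsto_gammaChoose_div_rpow (show 0 < a + k by positivity)).comp hA).ofReal
    have limit := coeff.mul (hX.pow k)
    rw [Complex.ofReal_inv, ← div_eq_inv_mul] at limit
    exact limit
  · filter_upwards [hX.norm.eventually_lt_const (lt_add_one ‖x‖), hmA] with i hXi hmi k hk
    have hkm : (k : ℝ) + 1 ≤ m i := mod_cast hk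
    have hak : 0 < a + k := by positivity
    have hakA : a + k < A i := by linarith
    have hAi : 0 < A i := hak.trans hakA
    rw [norm_mul, norm_pow, Complex.norm_of_nonneg
      (div_nonneg (gammaChoose_nonneg hak hakA) (by positivity)), div_eq_inv_mul _ (Real.Gamma _)]
    exact mul_le_mul (gammaChoose_div_rpow_le hak hakA)
      (pow_le_pow_left₀ (norm_nonneg _) hXi.le k) (by positivity) (by positivity)

theorem tendsto_mul_binomialTail {u p : ι → ℂ} {y : ℂ} (ha : 0 < a) (hA : Tendsto A l atTop)
    (hm : Tendsto m l atTop) (hmA : ∀ᶠ i in l, a + m i < A i + 1)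
    (hu : Tendsto (fun i => A i * u i) l (𝓝 x))
    (hp : Tendsto (fun i => p i * (A i ^ a : ℝ)) l (𝓝 y)) :
    Tendsto (fun i => p i * binomialTail a (A i) (m i) (u i)) l (𝓝 (y * tricomiGamma a x)) := by
  have hA_pos : ∀ᶠ i in l, 0 < A i := hA.eventually_gt_atTop 0
  have hu_zero : Tendsto u l (𝓝 0) := tendsto_zero_of_ofReal_mul_tendsto hA hu
  have hpow : Tendsto (fun i => (1 + u i) ^ ((-(A i - 1) : ℝ) : ℂ)) l (𝓝 (Complex.exp (-x))) := by
    refine tendsto_one_add_cpow hu_zero ?_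
    have exponent := hu_zero.sub hu
    rw [zero_sub] at exponent
    refine exponent.congr fun i => ?_
    push_cast
    ring
  have limit := (hp.mul (tendsto_sum_gammaChoose_div_rpow_mul_pow ha hA hm hmA hu)).mul hpow
  have limit_eq : y * (Complex.exp x * tricomiGamma a x) * Complex.exp (-x) =
      y * tricomiGamma a x := by
    rw [Complex.exp_neg]
    field_simp [Complex.exp_ne_zero]
  rw [limit_eq] at limit
  refine limit.congr' ?_
  filter_upwards [hA_pos] with i hi
  have hAa : ((A i ^ a : ℝ) : ℂ) ≠ 0 := mod_cast (Real.rpow_pos_of_pos hi a).ne'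
  have hAi : (A i : ℂ) ≠ 0 := mod_cast hi.ne'
  rw [binomialTail, ← mul_assoc, mul_assoc (p i), Finset.mul_sum]
  congr 2
  refine sum_congr rfl fun k _ => ?_
  rw [Real.rpow_add_natCast hi.ne']
  rw [mul_pow]
  push_cast
  field_simp

end PoissonLimit

/-! ### Scaling at the origin -/

theorem zet0_eq_div_sqrt {N : ℕ} (hN : N ≠ 0) (n L : ℝ) (z : ℂ) :
    zet0 N n L z = z / (√(n + L) : ℝ) := by
  have hN' : (N : ℝ) ≠ 0 := mod_cast hN
  have radicand_eq : N * dlt N n L 0 = n + L := by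
    simp only [dlt, ne_eq, OfNat.ofNat_ne_zero, not_false_eq_true, zero_pow, add_zero,
      Real.one_rpow, mul_one]
    exact mul_div_cancel₀ _ hN'
  rw [zet0, sc, radicand_eq]

section Scaling

variable {ι : Type*} {l : Filter ι} {N : ι → ℕ} {n : ι → ℝ} {L : ℝ}

theorem tendsto_zet0_mul_sqrt {w : ι → ℂ} {w₀ : ℂ} (hN : ∀ᶠ i in l, N i ≠ 0)
    (hn : Tendsto n l atTop) (hw : Tendsto w l (𝓝 w₀)) (c : ℝ) :
    Tendsto (fun i => zet0 (N i) (n i) L (w i) * (√(n i + L + c) : ℝ)) l (𝓝 w₀) := by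
  have hnL : Tendsto (fun i => n i + L) l atTop := tendsto_atTop_add_const_right _ L hn
  have radicand : Tendsto (fun i => 1 + c / (n i + L)) l (𝓝 1) := by
    simpa only [add_zero] using (hnL.const_div_atTop c).const_add 1
  have limit := hw.mul ((Real.continuous_sqrt.tendsto 1).comp radicand).ofReal
  rw [Real.sqrt_one, Complex.ofReal_one, mul_one] at limit
  refine limit.congr' ?_
  filter_upwards [hN, hnL.eventually_gt_atTop 0] with i hNi hi
  rw [zet0_eq_div_sqrt hNi, comp_apply, one_add_div hi.ne', Real.sqrt_div' _ hi.le,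
    Complex.ofReal_div]
  ring

theorem tendsto_mul_zet0_mul_zet0 {z w : ι → ℂ} {z₀ w₀ : ℂ} {M : ℝ} (hN : ∀ᶠ i in l, N i ≠ 0)
    (hn : Tendsto n l atTop) (hz : Tendsto z l (𝓝 z₀)) (hw : Tendsto w l (𝓝 w₀)) :
    Tendsto (fun i => ((2 * n i + M : ℝ) : ℂ) *
      (zet0 (N i) (n i) (M / 2) (z i) * zet0 (N i) (n i) (M / 2) (w i))) l
      (𝓝 (2 * z₀ * w₀)) := by
  have limit := ((tendsto_zet0_mul_sqrt (L := M / 2) hN hn hz 0).mul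
    (tendsto_zet0_mul_sqrt (L := M / 2) hN hn hw 0)).const_mul 2
  rw [← mul_assoc] at limit
  refine limit.congr' ?_
  filter_upwards [(tendsto_atTop_add_const_right l (M / 2) hn).eventually_ge_atTop 0] with i hi
  have sqrt_sq : ((√(n i + M / 2) : ℝ) : ℂ) ^ 2 = ((n i + M / 2 : ℝ) : ℂ) := by
    rw [← Complex.ofReal_pow, Real.sq_sqrt hi]
  rw [add_zero]
  push_cast at sqrt_sq ⊢
  linear_combination
    2 * (zet0 (N i) (n i) (M / 2) (z i) * zet0 (N i) (n i) (M / 2) (w i)) * sqrt_sq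

theorem tendsto_sum_zet0_mul_zet0 {z w : ι → ℂ} {z₀ w₀ : ℂ} {M : ℕ} (hM : 1 ≤ M)
    (hN : Tendsto N l atTop) (hNn : ∀ᶠ i in l, (N i : ℝ) ≤ n i)
    (hz : Tendsto z l (𝓝 z₀)) (hw : Tendsto w l (𝓝 w₀)) :
    Tendsto (fun i => ∑ k ∈ range (2 * N i),
        Complex.Gamma ((2 * n i + (M : ℝ) : ℝ) : ℂ) /
          (Complex.Gamma ((k + (M : ℝ) + 1 : ℝ) : ℂ) * Complex.Gamma ((2 * n i - k : ℝ) : ℂ)) *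
        (zet0 (N i) (n i) ((M : ℝ) / 2) (z i) * zet0 (N i) (n i) ((M : ℝ) / 2) (w i)) ^ (k + M) *
        (1 + zet0 (N i) (n i) ((M : ℝ) / 2) (z i) * zet0 (N i) (n i) ((M : ℝ) / 2) (w i)) ^
          ((-(2 * n i + (M : ℝ) - 1) : ℝ) : ℂ)) l (𝓝 (P2L M (2 * z₀ * w₀))) := by
  have hn : Tendsto n l atTop :=
    tendsto_atTop_mono' l hNn (tendsto_natCast_atTop_atTop.comp hN)
  have hA : Tendsto (fun i => 2 * n i + M) l atTop :=
    tendsto_atTop_add_const_right _ _ (hn.const_mul_atTop two_pos)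
  have hu := tendsto_mul_zet0_mul_zet0 (M := M) (hN.eventually_ne_atTop 0) hn hz hw
  set u : ι → ℂ := fun i =>
    zet0 (N i) (n i) ((M : ℝ) / 2) (z i) * zet0 (N i) (n i) ((M : ℝ) / 2) (w i)
  have hp : Tendsto (fun i => u i ^ M * (((2 * n i + M) ^ (M : ℝ) : ℝ) : ℂ)) l
      (𝓝 ((2 * z₀ * w₀) ^ M)) := by
    refine (hu.pow M).congr fun i => ?_
    rw [Real.rpow_natCast, Complex.ofReal_pow, mul_pow, mul_comm]
  have hmA : ∀ᶠ i in l, (M : ℝ) + (2 * N i : ℕ) < 2 * n i + M + 1 := by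
    filter_upwards [hNn] with i hi
    push_cast
    linarith
  rw [P2L_eq_pow_mul_tricomiGamma hM]
  refine (tendsto_mul_binomialTail (Nat.cast_pos.2 hM) hA (hN.const_mul_atTop' two_pos) hmA hu
    hp).congr fun i => ?_
  rw [binomialTail, ← mul_assoc, Finset.mul_sum, Finset.sum_mul]
  refine sum_congr rfl fun k _ => ?_
  rw [ofReal_gammaChoose, add_comm (M : ℝ) k, add_sub_add_right_eq_sub, pow_add]
  ring

theorem tendsto_sum_zet0_sq {w : ι → ℂ} {w₀ : ℂ} {e : ℕ} (he : 1 ≤ e) (heL : e ≤ 2 * L + 1)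
    (hN : Tendsto N l atTop) (hNn : ∀ᶠ i in l, (N i : ℝ) ≤ n i) (hw : Tendsto w l (𝓝 w₀)) :
    Tendsto (fun i => ∑ k ∈ range (N i),
        Complex.Gamma ((n i + L + 1 / 2 : ℝ) : ℂ) /
          (Complex.Gamma ((k + (e : ℝ) / 2 + 1 : ℝ) : ℂ) *
            Complex.Gamma ((n i + L + 1 / 2 - (k + (e : ℝ) / 2) : ℝ) : ℂ)) *
        zet0 (N i) (n i) L (w i) ^ (2 * k + e) *
        (1 + zet0 (N i) (n i) L (w i) ^ 2) ^ ((-(n i + L - 1 / 2) : ℝ) : ℂ)) l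
      (𝓝 (w₀ ^ e * tricomiGamma ((e : ℝ) / 2) (w₀ ^ 2))) := by
  have hn : Tendsto n l atTop :=
    tendsto_atTop_mono' l hNn (tendsto_natCast_atTop_atTop.comp hN)
  have hA : Tendsto (fun i => n i + L + 1 / 2) l atTop :=
    tendsto_atTop_add_const_right _ _ (tendsto_atTop_add_const_right _ _ hn)
  set η : ι → ℂ := fun i => zet0 (N i) (n i) L (w i)
  have hη : Tendsto (fun i => η i * (√(n i + L + 1 / 2) : ℝ)) l (𝓝 w₀) :=
    tendsto_zet0_mul_sqrt (hN.eventually_ne_atTop 0) hn hw (1 / 2)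
  have hu : Tendsto (fun i => ((n i + L + 1 / 2 : ℝ) : ℂ) * η i ^ 2) l (𝓝 (w₀ ^ 2)) := by
    refine (hη.pow 2).congr' ?_
    filter_upwards [hA.eventually_gt_atTop 0] with i hi
    rw [mul_pow, ← Complex.ofReal_pow, Real.sq_sqrt hi.le, mul_comm]
  have hp : Tendsto (fun i => η i ^ e * (((n i + L + 1 / 2) ^ ((e : ℝ) / 2) : ℝ) : ℂ)) l
      (𝓝 (w₀ ^ e)) := by
    refine (hη.pow e).congr' ?_
    filter_upwards [hA.eventually_gt_atTop 0] with i hi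
    rw [mul_pow, ← Complex.ofReal_pow, Real.rpow_div_two_eq_sqrt _ hi.le, Real.rpow_natCast]
  have hmA : ∀ᶠ i in l, (e : ℝ) / 2 + N i < n i + L + 1 / 2 + 1 := by
    filter_upwards [hNn] with i hi
    linarith
  have ha : (0 : ℝ) < e / 2 := half_pos (Nat.cast_pos.2 he)
  refine (tendsto_mul_binomialTail ha hA hN hmA hu hp).congr fun i => ?_
  have exponent_eq : n i + L + 1 / 2 - 1 = n i + L - 1 / 2 := by ring
  rw [binomialTail, ← mul_assoc, Finset.mul_sum, Finset.sum_mul, exponent_eq]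
  refine sum_congr rfl fun k _ => ?_
  rw [ofReal_gammaChoose, add_comm ((e : ℝ) / 2) k]
  ring

end Scaling

theorem binomial_sum_limits_origin_general {l : Filter ℕ} (hl : l ≤ atTop) {n : ℕ → ℝ}
    (hn : ∀ᶠ N : ℕ in l, (N : ℝ) ≤ n N) {M : ℕ} (hM : 1 ≤ M) :
    TendstoLocallyUniformly
      (fun (N : ℕ) (q : ℂ × ℂ) =>
        ∑ k ∈ range (2 * N),
          Complex.Gamma ((2 * n N + (M : ℝ) : ℝ) : ℂ) /
            (Complex.Gamma ((k + (M : ℝ) + 1 : ℝ) : ℂ) *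
              Complex.Gamma ((2 * n N - k : ℝ) : ℂ)) *
          (zet0 N (n N) ((M : ℝ) / 2) q.1 * zet0 N (n N) ((M : ℝ) / 2) q.2) ^ (k + M) *
          (1 + zet0 N (n N) ((M : ℝ) / 2) q.1 * zet0 N (n N) ((M : ℝ) / 2) q.2) ^
            ((-(2 * n N + (M : ℝ) - 1) : ℝ) : ℂ))
      (fun q => P2L M (2 * q.1 * q.2)) l ∧
    TendstoLocallyUniformly
      (fun (N : ℕ) (q : ℂ × ℂ) =>
        ∑ k ∈ range N,
          Complex.Gamma ((n N + (M : ℝ) / 2 + 1 / 2 : ℝ) : ℂ) /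
            (Complex.Gamma ((k + (M : ℝ) / 2 + 1 : ℝ) : ℂ) *
              Complex.Gamma ((n N - k + 1 / 2 : ℝ) : ℂ)) *
          zet0 N (n N) ((M : ℝ) / 2) q.2 ^ (2 * k + M) *
          (1 + zet0 N (n N) ((M : ℝ) / 2) q.2 ^ 2) ^ ((-(n N + (M : ℝ) / 2 - 1 / 2) : ℝ) : ℂ))
      (fun q => PLfun M q.2) l ∧
    TendstoLocallyUniformly
      (fun (N : ℕ) (q : ℂ × ℂ) =>
        ∑ k ∈ range N,
          Complex.Gamma ((n N + (M : ℝ) / 2 + 1 / 2 : ℝ) : ℂ) /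
            (Complex.Gamma ((k + (M : ℝ) / 2 + 3 / 2 : ℝ) : ℂ) *
              Complex.Gamma ((n N - k : ℝ) : ℂ)) *
          zet0 N (n N) ((M : ℝ) / 2) q.2 ^ (2 * k + M + 1) *
          (1 + zet0 N (n N) ((M : ℝ) / 2) q.2 ^ 2) ^ ((-(n N + (M : ℝ) / 2 - 1 / 2) : ℝ) : ℂ))
      (fun q => PLhalf M ((M : ℝ) / 2) q.2) l := by
  have hN (q : ℂ × ℂ) : Tendsto (Prod.fst : ℕ × (ℂ × ℂ) → ℕ) (l ×ˢ 𝓝 q) atTop :=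
    tendsto_fst.mono_right hl
  have hz (q : ℂ × ℂ) : Tendsto (fun r : ℕ × (ℂ × ℂ) => r.2.1) (l ×ˢ 𝓝 q) (𝓝 q.1) :=
    (continuous_fst.tendsto q).comp tendsto_snd
  have hw (q : ℂ × ℂ) : Tendsto (fun r : ℕ × (ℂ × ℂ) => r.2.2) (l ×ˢ 𝓝 q) (𝓝 q.2) :=
    (continuous_snd.tendsto q).comp tendsto_snd
  have hNn (q : ℂ × ℂ) : ∀ᶠ r : ℕ × (ℂ × ℂ) in l ×ˢ 𝓝 q, (r.1 : ℝ) ≤ n r.1 :=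
    tendsto_fst.eventually hn
  refine ⟨tendstoLocallyUniformly_of_tendsto_uncurry fun q => ?_,
    tendstoLocallyUniformly_of_tendsto_uncurry fun q => ?_,
    tendstoLocallyUniformly_of_tendsto_uncurry fun q => ?_⟩
  · exact tendsto_sum_zet0_mul_zet0 hM (hN q) (hNn q) (hz q) (hw q)
  · rw [PLfun_eq_pow_mul_tricomiGamma]
    refine (tendsto_sum_zet0_sq hM (L := M / 2) (by linarith) (hN q) (hNn q) (hw q)).congr
      fun r => sum_congr rfl fun k _ => ?_
    have lower_eq : n r.1 + (M : ℝ) / 2 + 1 / 2 - (k + (M : ℝ) / 2) = n r.1 - k + 1 / 2 := by ring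
    rw [lower_eq]
  · have index_eq : ((M + 1 : ℕ) : ℝ) / 2 = (M : ℝ) / 2 + 1 / 2 := by push_cast; ring
    rw [PLhalf_eq_pow_mul_tricomiGamma, ← index_eq]
    refine (tendsto_sum_zet0_sq (Nat.le_add_left 1 M) (L := M / 2) (by push_cast; linarith)
      (hN q) (hNn q) (hw q)).congr fun r => sum_congr rfl fun k _ => ?_
    have upper_eq : k + ((M + 1 : ℕ) : ℝ) / 2 + 1 = k + (M : ℝ) / 2 + 3 / 2 := by push_cast; ring
    have lower_eq : n r.1 + (M : ℝ) / 2 + 1 / 2 - (k + ((M + 1 : ℕ) : ℝ) / 2) = n r.1 - k := by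
      push_cast
      ring
    rw [upper_eq, lower_eq]
    rfl

/-- Lemma 3.5(c): incomplete-gamma limits of the binomial-type sums at
the singular origin, with `L = M/2`, `2L = M` a positive integer. -/
theorem binomial_sum_limits_origin (b : ℝ) (hb : 0 < b) (M : ℕ) (hM1 : 1 ≤ M)
    (K : Set (ℂ × ℂ)) (hK : IsCompact K) :
    TendstoUniformlyOn
      (fun (N : ℕ) (q : ℂ × ℂ) =>
        ∑ k ∈ range (2*N),
          Complex.Gamma ((2*((b+1)*N)+(M:ℝ) : ℝ) : ℂ) /
            (Complex.Gamma ((k+(M:ℝ)+1 : ℝ) : ℂ) *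
              Complex.Gamma ((2*((b+1)*N)-k : ℝ) : ℂ)) *
          (zet0 N ((b+1)*N) ((M:ℝ)/2) q.1 * zet0 N ((b+1)*N) ((M:ℝ)/2) q.2) ^ (k+M) *
          (1 + zet0 N ((b+1)*N) ((M:ℝ)/2) q.1 * zet0 N ((b+1)*N) ((M:ℝ)/2) q.2)
            ^ ((-(2*((b+1)*N)+(M:ℝ)-1) : ℝ) : ℂ))
      (fun q => P2L M (2*q.1*q.2)) (atTop ⊓ 𝓟 (Ssing b)) K ∧
    TendstoUniformlyOn
      (fun (N : ℕ) (q : ℂ × ℂ) =>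
        ∑ k ∈ range N,
          Complex.Gamma ((((b+1)*N)+(M:ℝ)/2+1/2 : ℝ) : ℂ) /
            (Complex.Gamma ((k+(M:ℝ)/2+1 : ℝ) : ℂ) *
              Complex.Gamma ((((b+1)*N)-k+1/2 : ℝ) : ℂ)) *
          zet0 N ((b+1)*N) ((M:ℝ)/2) q.2 ^ (2*k+M) *
          (1 + zet0 N ((b+1)*N) ((M:ℝ)/2) q.2 ^ 2)
            ^ ((-(((b+1)*N)+(M:ℝ)/2-1/2) : ℝ) : ℂ))
      (fun q => PLfun M q.2) (atTop ⊓ 𝓟 (Ssing b)) K ∧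
    TendstoUniformlyOn
      (fun (N : ℕ) (q : ℂ × ℂ) =>
        ∑ k ∈ range N,
          Complex.Gamma ((((b+1)*N)+(M:ℝ)/2+1/2 : ℝ) : ℂ) /
            (Complex.Gamma ((k+(M:ℝ)/2+3/2 : ℝ) : ℂ) *
              Complex.Gamma ((((b+1)*N)-k : ℝ) : ℂ)) *
          zet0 N ((b+1)*N) ((M:ℝ)/2) q.2 ^ (2*k+M+1) *
          (1 + zet0 N ((b+1)*N) ((M:ℝ)/2) q.2 ^ 2)
            ^ ((-(((b+1)*N)+(M:ℝ)/2-1/2) : ℝ) : ℂ))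
      (fun q => PLhalf M ((M:ℝ)/2) q.2) (atTop ⊓ 𝓟 (Ssing b)) K := by
  have hn : ∀ᶠ N : ℕ in atTop ⊓ 𝓟 (Ssing b), (N : ℝ) ≤ (b + 1) * N :=
    .of_forall fun N => le_mul_of_one_le_left N.cast_nonneg (by linarith)
  obtain ⟨h₁, h₂, h₃⟩ := binomial_sum_limits_origin_general inf_le_left hn hM1
  simp only [tendstoLocallyUniformly_iff_forall_isCompact] at h₁ h₂ h₃
  exact ⟨h₁ K hK, h₂ K hK, h₃ K hK⟩

end SI
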